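/- Let X₁, X₂ be Polish metric spaces and let C : X₁ × 𝒫(X₂) → (−∞,+∞] be lower semi-continuous, bounded from below, with C(x₁,·) convex on 𝒫(X₂) for every x₁ ∈ X₁. If {π^k} ⊂ ℳ(X₁×X₂) converges to π in the weak* topology, then liminf_{k→∞} ∫_{X₁} C(x₁, π^k_{x₁}) dπ^k₁(x₁) ≥ ∫_{X₁} C(x₁, π_{x₁}) dπ₁(x₁). -/

import Mathlib

open MeasureTheory Filter Set Topology
open scoped ENNReal NNReal BoundedContinuousFunction

noncomputable section

/-- The "positive part" of an extended real number, as an element of `ℝ≥0∞`. -/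
def posE (a : EReal) : ℝ≥0∞ := if a = ⊤ then ⊤ else ENNReal.ofReal a.toReal

/-- Integral of an `EReal`-valued function: positive part minus negative part
(in `EReal`, so that it is always defined). -/
def eIntegral {α : Type*} [MeasurableSpace α] (μ : Measure α) (f : α → EReal) : EReal :=
  ((∫⁻ x, posE (f x) ∂μ : ℝ≥0∞) : EReal) - ((∫⁻ x, posE (-(f x)) ∂μ : ℝ≥0∞) : EReal)

/-- The recession constant `lim_{s→∞} G(s)/s` (as a `limsup`, which coincides with the
limit for convex functions). -/
def recessionOf (G : ℝ → ℝ≥0∞) : ℝ≥0∞ :=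
  Filter.limsup (fun s : ℝ => G s / ENNReal.ofReal s) Filter.atTop

/-- An admissible entropy function: a convex, lower semicontinuous function
`F : [0,∞) → [0,∞]` which is finite at some positive point. -/
structure EntropyFn where
  F : ℝ → ℝ≥0∞
  convex' : ∀ a ∈ Ici (0:ℝ), ∀ b ∈ Ici (0:ℝ), ∀ t : ℝ, 0 ≤ t → t ≤ 1 →
    F (t * a + (1 - t) * b) ≤ ENNReal.ofReal t * F a + ENNReal.ofReal (1 - t) * F b
  lsc : LowerSemicontinuousOn F (Ici (0:ℝ))
  dom : ∃ s : ℝ, 0 < s ∧ F s ≠ ∞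

namespace EntropyFn

/-- The recession constant `F'_∞ = lim_{s→∞} F(s)/s`. -/
def recC (F : EntropyFn) : ℝ≥0∞ := recessionOf F.F

/-- `F` is superlinear if `F'_∞ = ∞`. -/
def Superlinear (F : EntropyFn) : Prop := F.recC = ∞

/-- `F°(φ) := inf_{s ≥ 0} (φ·s + F(s))`, extended to `EReal` arguments. -/
def circ (F : EntropyFn) (φ : EReal) : EReal :=
  ⨅ s : Ici (0:ℝ), φ * ((s : ℝ) : EReal) + ((F.F (s : ℝ) : ℝ≥0∞) : EReal)

/-- The (interior of the) domain of `F°` is taken inside the set where `F°` is not `-∞`. -/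
def circDom (F : EntropyFn) : Set ℝ := {φ : ℝ | F.circ (φ : EReal) ≠ ⊥}

/-- The reverse entropy function `R(r) = r·F(1/r)` for `r > 0`, with `R(0) = F'_∞`. -/
def revF (F : EntropyFn) (r : ℝ) : ℝ≥0∞ :=
  if 0 < r then ENNReal.ofReal r * F.F (1 / r) else F.recC

/-- The Legendre conjugate `R*(ψ) = sup_{s ≥ 0} (s·ψ − R(s))` of the reverse function. -/
def revConj (F : EntropyFn) (ψ : ℝ) : EReal :=
  ⨆ s : Ici (0:ℝ), (((s : ℝ) * ψ : ℝ) : EReal) - ((F.revF (s : ℝ) : ℝ≥0∞) : EReal)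

end EntropyFn

/-- The entropy functional `ℱ(γ|μ) = ∫ F(dγ/dμ) dμ + F'_∞ · γ^⊥(X)`, where
`γ = (dγ/dμ)·μ + γ^⊥` is the Lebesgue decomposition of `γ` with respect to `μ`. -/
def entF {X : Type*} [MeasurableSpace X] (F : EntropyFn) (γ μ : Measure X) : ℝ≥0∞ :=
  (∫⁻ x, F.F ((γ.rnDeriv μ x).toReal) ∂μ) + F.recC * (γ.singularPart μ) Set.univ

/-- The reverse entropy functional `ℛ(μ|γ) = ∫ R(dμ/dγ) dγ + R'_∞ · μ^⊥(X)`. -/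
def revEntF {X : Type*} [MeasurableSpace X] (F : EntropyFn) (μ γ : Measure X) : ℝ≥0∞ :=
  (∫⁻ x, F.revF ((μ.rnDeriv γ x).toReal) ∂γ) + recessionOf F.revF * (μ.singularPart γ) Set.univ

section WOET

variable {X₁ X₂ : Type*} [MeasurableSpace X₁] [MeasurableSpace X₂]

/-- The weak entropy-transport cost
`ℰ_C(γ|μ₁,μ₂) = ℱ₁(γ₁|μ₁) + ℱ₂(γ₂|μ₂) + ∫ C(x₁, γ_{x₁}) dγ₁(x₁)`. -/
def wCost [StandardBorelSpace X₂] [Nonempty X₂]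
    (C : X₁ → ProbabilityMeasure X₂ → EReal) (F₁ F₂ : EntropyFn)
    (μ₁ : Measure X₁) (μ₂ : Measure X₂)
    (γ : Measure (X₁ × X₂)) (hγ : IsFiniteMeasure γ) : EReal :=
  haveI := hγ
  ((entF F₁ γ.fst μ₁ : ℝ≥0∞) : EReal) + ((entF F₂ γ.snd μ₂ : ℝ≥0∞) : EReal) +
    eIntegral γ.fst (fun x₁ => C x₁ ⟨γ.condKernel x₁, inferInstance⟩)

/-- The weak optimal entropy-transport value `ℰ_C(μ₁,μ₂)`. -/
def wOpt [StandardBorelSpace X₂] [Nonempty X₂]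
    (C : X₁ → ProbabilityMeasure X₂ → EReal) (F₁ F₂ : EntropyFn)
    (μ₁ : Measure X₁) (μ₂ : Measure X₂) : EReal :=
  sInf { e : EReal | ∃ (γ : Measure (X₁ × X₂)) (hγ : IsFiniteMeasure γ),
    e = wCost C F₁ F₂ μ₁ μ₂ γ hγ }

variable [TopologicalSpace X₁] [TopologicalSpace X₂]

/-- The dual feasible set `Λ`. -/
def lamSet (C : X₁ → ProbabilityMeasure X₂ → EReal) (F₁ F₂ : EntropyFn) :
    Set ((X₁ →ᵇ ℝ) × (X₂ →ᵇ ℝ)) :=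
  { φ | (∀ x, φ.1 x ∈ interior F₁.circDom) ∧ (∀ x, φ.2 x ∈ interior F₂.circDom) ∧
      ∀ (x₁ : X₁) (p : ProbabilityMeasure X₂),
        ((φ.1 x₁ + ∫ x₂, φ.2 x₂ ∂(p : Measure X₂) : ℝ) : EReal) ≤ C x₁ p }

/-- The dual feasible set `Λ_R`. -/
def lamRSet (C : X₁ → ProbabilityMeasure X₂ → EReal) (F₁ F₂ : EntropyFn) :
    Set ((X₁ →ᵇ ℝ) × (X₂ →ᵇ ℝ)) :=
  { φ | (∃ b : ℝ, ((b : ℝ) : EReal) < ((F₁.F 0 : ℝ≥0∞) : EReal) ∧ ∀ x, φ.1 x ≤ b) ∧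
        (∃ b : ℝ, ((b : ℝ) : EReal) < ((F₂.F 0 : ℝ≥0∞) : EReal) ∧ ∀ x, φ.2 x ≤ b) ∧
        ∀ (x₁ : X₁) (p : ProbabilityMeasure X₂),
          F₁.revConj (φ.1 x₁) + eIntegral (p : Measure X₂) (fun x₂ => F₂.revConj (φ.2 x₂))
            ≤ C x₁ p }

/-- The dual feasible set `Λ_ET` (constraints tested against all pairs of nonnegative finite
measures; on all other signed measures `ET = +∞`, so those constraints are vacuous). -/
def lamETSet [StandardBorelSpace X₂] [Nonempty X₂]
    (C : X₁ → ProbabilityMeasure X₂ → EReal) (F₁ F₂ : EntropyFn) :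
    Set ((X₁ →ᵇ ℝ) × (X₂ →ᵇ ℝ)) :=
  { φ | ∀ (μ₁ : Measure X₁) (μ₂ : Measure X₂), IsFiniteMeasure μ₁ → IsFiniteMeasure μ₂ →
      (((∫ x, φ.1 x ∂μ₁) + ∫ x, φ.2 x ∂μ₂ : ℝ) : EReal) ≤ wOpt C F₁ F₂ μ₁ μ₂ }

/-- The set `Λ_ET^<`. -/
def lamETltSet [StandardBorelSpace X₂] [Nonempty X₂]
    (C : X₁ → ProbabilityMeasure X₂ → EReal) (F₁ F₂ : EntropyFn) :
    Set ((X₁ →ᵇ ℝ) × (X₂ →ᵇ ℝ)) :=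
  { φ ∈ lamETSet C F₁ F₂ |
      (∃ b : ℝ, ((b : ℝ) : EReal) < ((F₁.F 0 : ℝ≥0∞) : EReal) ∧ ∀ x, φ.1 x ≤ b) ∧
      (∃ b : ℝ, ((b : ℝ) : EReal) < ((F₂.F 0 : ℝ≥0∞) : EReal) ∧ ∀ x, φ.2 x ≤ b) }

/-- `R_C φ(x₁) := inf_{p ∈ 𝒫(X₂)} (C(x₁,p) + ∫ φ dp)`. -/
def RCfun (C : X₁ → ProbabilityMeasure X₂ → EReal) (φ : X₂ →ᵇ ℝ) (x₁ : X₁) : EReal :=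
  ⨅ p : ProbabilityMeasure X₂, C x₁ p + ((∫ x₂, φ x₂ ∂(p : Measure X₂) : ℝ) : EReal)

/-- Property (BM) of an admissible entropy function on a space `X`. -/
def HasBM (X : Type*) [TopologicalSpace X] [MeasurableSpace X] (F : EntropyFn) : Prop :=
  ∀ ψ : X →ᵇ ℝ, (∃ b : ℝ, ((b : ℝ) : EReal) < ((F.F 0 : ℝ≥0∞) : EReal) ∧ ∀ x, ψ x ≤ b) →
    ∃ s : X → ℝ, Measurable s ∧ (∃ M : ℝ, ∀ x, |s x| ≤ M) ∧ (∀ x, 0 < s x) ∧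
      ∀ x, ((F.revF (s x) : ℝ≥0∞) : EReal) + F.revConj (ψ x) = ((s x * ψ x : ℝ) : EReal)

end WOET

/-- The functional `ET` extended to pairs of finite signed measures:
it equals `ℰ_C(μ₁,μ₂)` when both arguments are (induced by) nonnegative finite measures,
and `+∞` otherwise. -/
def ETsgn {X₁ X₂ : Type*} [MeasurableSpace X₁] [MeasurableSpace X₂]
    [StandardBorelSpace X₂] [Nonempty X₂]
    (C : X₁ → ProbabilityMeasure X₂ → EReal) (F₁ F₂ : EntropyFn)
    (ν₁ : SignedMeasure X₁) (ν₂ : SignedMeasure X₂) : EReal :=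
  sInf { e : EReal | ∃ (μ₁ : Measure X₁) (h₁ : IsFiniteMeasure μ₁)
      (μ₂ : Measure X₂) (h₂ : IsFiniteMeasure μ₂),
      ν₁ = @Measure.toSignedMeasure X₁ _ μ₁ h₁ ∧ ν₂ = @Measure.toSignedMeasure X₂ _ μ₂ h₂ ∧
      e = wOpt C F₁ F₂ μ₁ μ₂ }

section Martingale

variable {X : Set ℝ}

/-- The martingale condition for a finite measure on `X × X`:
`∫ y dγ_x(y) = x` for `γ₁`-a.e. `x`. -/
def martCond [StandardBorelSpace ↥X] [Nonempty ↥X]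
    (γ : Measure (↥X × ↥X)) (hγ : IsFiniteMeasure γ) : Prop :=
  haveI := hγ
  ∀ᵐ x ∂γ.fst, (∫ y, (y : ℝ) ∂(γ.condKernel x)) = (x : ℝ)

/-- The martingale optimal entropy transport value `ℰ_M(μ₁,μ₂)` (with an `EReal`-valued
cost `c`). -/
def eMart [StandardBorelSpace ↥X] [Nonempty ↥X]
    (c : ↥X → ↥X → EReal) (F₁ F₂ : EntropyFn) (μ₁ μ₂ : Measure ↥X) : EReal :=
  sInf { e : EReal | ∃ (γ : Measure (↥X × ↥X)) (hγ : IsFiniteMeasure γ), martCond γ hγ ∧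
    e = ((entF F₁ γ.fst μ₁ : ℝ≥0∞) : EReal) + ((entF F₂ γ.snd μ₂ : ℝ≥0∞) : EReal) +
        eIntegral γ (fun q => c q.1 q.2) }

/-- The martingale optimal entropy transport value `ℰ_M(μ₁,μ₂)` (with a `[0,∞]`-valued
cost `c`). -/
def eMartNN [StandardBorelSpace ↥X] [Nonempty ↥X]
    (c : ↥X → ↥X → ℝ≥0∞) (F₁ F₂ : EntropyFn) (μ₁ μ₂ : Measure ↥X) : EReal :=
  sInf { e : EReal | ∃ (γ : Measure (↥X × ↥X)) (hγ : IsFiniteMeasure γ), martCond γ hγ ∧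
    e = ((entF F₁ γ.fst μ₁ + entF F₂ γ.snd μ₂ + ∫⁻ q, c q.1 q.2 ∂γ : ℝ≥0∞) : EReal) }

/-- The dual feasible set `Λ_M` for the martingale problem. -/
def lamM (c : ↥X → ↥X → EReal) (F₁ F₂ : EntropyFn) : Set ((↥X →ᵇ ℝ) × (↥X →ᵇ ℝ)) :=
  { φ | (∀ x, φ.1 x ∈ interior F₁.circDom) ∧ (∀ x, φ.2 x ∈ interior F₂.circDom) ∧
      ∃ h : ↥X →ᵇ ℝ, ∀ x₁ x₂ : ↥X,
        ((φ.1 x₁ + φ.2 x₂ + h x₁ * ((x₂ : ℝ) - (x₁ : ℝ)) : ℝ) : EReal) ≤ c x₁ x₂ }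

/-- The perspective function `r·F(θ/r)` with the convention `r·F(θ/r) = θ·F'_∞` for `r = 0`. -/
def perspFn (F : EntropyFn) (r θ : ℝ) : ℝ≥0∞ :=
  if r = 0 then ENNReal.ofReal θ * F.recC else ENNReal.ofReal r * F.F (θ / r)

/-- The homogeneous marginal perspective cost `H(x₁,r₁;x₂,r₂)` (the dependence on
`(x₁,x₂)` is through the value `c = c(x₁,x₂)`). -/
def Hcost (F₁ F₂ : EntropyFn) (c : ℝ≥0∞) (r₁ r₂ : ℝ) : ℝ≥0∞ :=
  if c ≠ ∞ then
    ⨅ θ : Ioi (0:ℝ), perspFn F₁ r₁ (θ : ℝ) + perspFn F₂ r₂ (θ : ℝ) + ENNReal.ofReal (θ : ℝ) * c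
  else F₁.F 0 * ENNReal.ofReal r₁ + F₂.F 0 * ENNReal.ofReal r₂

/-- The functional `ℋ(μ₁,μ₂|γ)`. -/
def hMargFun (F₁ F₂ : EntropyFn) (c : ↥X → ↥X → ℝ≥0∞) (μ₁ μ₂ : Measure ↥X)
    (γ : Measure (↥X × ↥X)) : ℝ≥0∞ :=
  (∫⁻ q, Hcost F₁ F₂ (c q.1 q.2) ((μ₁.rnDeriv γ.fst q.1).toReal)
      ((μ₂.rnDeriv γ.snd q.2).toReal) ∂γ)
    + F₁.F 0 * (μ₁.singularPart γ.fst) Set.univ + F₂.F 0 * (μ₂.singularPart γ.snd) Set.univ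

/-- The functional `ℛ(μ₁,μ₂|γ)`. -/
def rMargFun (F₁ F₂ : EntropyFn) (c : ↥X → ↥X → ℝ≥0∞) (μ₁ μ₂ : Measure ↥X)
    (γ : Measure (↥X × ↥X)) : ℝ≥0∞ :=
  revEntF F₁ μ₁ γ.fst + revEntF F₂ μ₂ γ.snd + ∫⁻ q, c q.1 q.2 ∂γ

/-- The first `p`-homogeneous marginal of a measure on `Y × Y`, `Y = X × [0,∞)`. -/
def hMarg1 (p : ℝ) (α : Measure ((↥X × ℝ≥0) × (↥X × ℝ≥0))) : Measure ↥X :=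
  Measure.map (fun q => q.1.1) (α.withDensity fun q => (q.1.2 : ℝ≥0∞) ^ p)

/-- The second `p`-homogeneous marginal of a measure on `Y × Y`, `Y = X × [0,∞)`. -/
def hMarg2 (p : ℝ) (α : Measure ((↥X × ℝ≥0) × (↥X × ℝ≥0))) : Measure ↥X :=
  Measure.map (fun q => q.2.1) (α.withDensity fun q => (q.2.2 : ℝ≥0∞) ^ p)

/-- Membership in the homogeneous constraint set `ℋ^p_{M,≤}(μ₁,μ₂)`. -/
def memHpM (p : ℝ) (μ₁ μ₂ : Measure ↥X) (α : Measure ((↥X × ℝ≥0) × (↥X × ℝ≥0))) : Prop :=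
  IsFiniteMeasure α ∧ (∫⁻ q, (q.1.2 : ℝ≥0∞) ^ p + (q.2.2 : ℝ≥0∞) ^ p ∂α) ≠ ∞ ∧
    hMarg1 p α ≤ μ₁ ∧ hMarg2 p α ≤ μ₂ ∧
    ∀ h : ↥X →ᵇ ℝ, (∫ q, h q.1.1 * ((q.2.1 : ℝ) - (q.1.1 : ℝ)) ∂α) = 0

end Martingale

/-!
A measure `ρ` on `X × Y` lifts to the law `condProbLaw ρ` of `x ↦ (x, ρ_x)` on
`X × ProbabilityMeasure Y`, and its cost `∫ c (x, ρ_x) dρ₁` is the integral of `c` against this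
lift. Conditional laws need not converge when `ρ` does, but after embedding `X` and `Y` in Hilbert
cubes the lifts have bounded mass on a compact space, hence limit points. The *intensity*
`∫ δ_x ⊗ p dP(x, p)` is weakly continuous in `P` and sends the lift of `ρ` back to `ρ`, so every
limit `P` of the lifts of measures `ρ → ρ₀` has the image of `ρ₀` as its intensity, and therefore
pulls back to `X × ProbabilityMeasure Y`. There the conditional laws of `P` given `x` have
barycenter `(ρ₀)_x`, so Jensen's inequality bounds the cost of `ρ₀` by `∫ c dP`, which in turn is at
most the limit inferior of the costs because `c` is lower semicontinuous.
-/

open ProbabilityTheory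

/-- The tautological kernel `p ↦ p` from `ProbabilityMeasure Ω` to `Ω`. -/
def coeKernel (Ω : Type*) [MeasurableSpace Ω] : Kernel (ProbabilityMeasure Ω) Ω :=
  ⟨fun p => p, measurable_subtype_coe⟩

instance isMarkovKernel_coeKernel (Ω : Type*) [MeasurableSpace Ω] :
    IsMarkovKernel (coeKernel Ω) :=
  ⟨fun p => p.2⟩

theorem measurable_integral_probabilityMeasure {Ω : Type*} [MeasurableSpace Ω] {f : Ω → ℝ}
    (hf : Measurable f) :
    Measurable fun p : ProbabilityMeasure Ω => ∫ y, f y ∂(p : Measure Ω) :=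
  (hf.stronglyMeasurable.integral_kernel (κ := coeKernel Ω)).measurable

section Pushforward

variable {Y Y' : Type*} [MeasurableSpace Y] [MeasurableSpace Y']

/-- The pushforward `p ↦ f_* p` as a map between spaces of probability measures. -/
def pushforward {f : Y → Y'} (hf : Measurable f) (p : ProbabilityMeasure Y) :
    ProbabilityMeasure Y' :=
  p.map hf.aemeasurable

theorem measurable_pushforward {f : Y → Y'} (hf : Measurable f) : Measurable (pushforward hf) :=
  ((Measure.measurable_map f hf).comp measurable_subtype_coe).subtype_mk

theorem pushforward_id : pushforward (measurable_id (α := Y)) = id :=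
  funext fun _ => Subtype.ext Measure.map_id

theorem pushforward_pushforward_of_leftInverse {f : Y → Y'} (hf : MeasurableEmbedding f)
    {r : Y' → Y} (hr : Measurable r) (hrf : r.LeftInverse f) {p : ProbabilityMeasure Y'}
    (hp : (p : Measure Y') (range f)ᶜ = 0) :
    pushforward hf.measurable (pushforward hr p) = p := by
  refine Subtype.ext ((Measure.map_map hf.measurable hr).trans ?_)
  refine (Measure.map_congr (g := id) ?_).trans Measure.map_id
  filter_upwards [(mem_ae_iff.2 hp : range f ∈ ae (p : Measure Y'))] with _ ⟨y, hy⟩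
  simp only [Function.comp_apply, ← hy, hrf y, id]

theorem measurableEmbedding_pushforward [Nonempty Y] {f : Y → Y'} (hf : MeasurableEmbedding f) :
    MeasurableEmbedding (pushforward hf.measurable) := by
  obtain ⟨r, hr, hrf⟩ := hf.exists_measurable_extend measurable_id fun _ => ‹Nonempty Y›
  have hrange : range (pushforward hf.measurable) =
      {p : ProbabilityMeasure Y' | (p : Measure Y') (range f)ᶜ = 0} := by
    refine Subset.antisymm (range_subset_iff.2 fun p => ?_) fun p hp =>
      ⟨pushforward hr p, pushforward_pushforward_of_leftInverse hf hr (congrFun hrf) hp⟩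
    refine (Measure.map_apply hf.measurable hf.measurableSet_range.compl).trans ?_
    rw [preimage_compl, preimage_range, compl_univ, measure_empty]
  refine .of_measurable_inverse (measurable_pushforward _) ?_ (measurable_pushforward hr) fun p =>
    Subtype.ext ((Measure.map_map hr hf.measurable).trans ?_)
  · rw [hrange]
    exact ((Measure.measurable_coe hf.measurableSet_range.compl).comp measurable_subtype_coe)
      (measurableSet_singleton 0)
  · rw [hrf, Measure.map_id]
    rfl

end Pushforward

section WeakTopology

variable {Ω : Type*} [TopologicalSpace Ω] [MeasurableSpace Ω]

theorem isInducing_integral_boundedContinuousFunction [OpensMeasurableSpace Ω] :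
    IsInducing fun (p : ProbabilityMeasure Ω) (φ : Ω →ᵇ ℝ) => ∫ y, φ y ∂(p : Measure Ω) := by
  refine isInducing_iff_nhds.2 fun p => le_antisymm ?_ ?_
  · rw [← tendsto_iff_comap, tendsto_pi_nhds]
    exact ProbabilityMeasure.tendsto_iff_forall_integral_tendsto.1 tendsto_id
  · exact (ProbabilityMeasure.tendsto_iff_forall_integral_tendsto (F := comap _ _) (μs := id)).2
      (tendsto_pi_nhds.1 tendsto_comap)

theorem isInducing_pushforward {Ω' : Type*} [TopologicalSpace Ω'] [MeasurableSpace Ω']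
    [BorelSpace Ω] [TopologicalSpace.PseudoMetrizableSpace Ω]
    [BorelSpace Ω'] [TopologicalSpace.PseudoMetrizableSpace Ω'] [SecondCountableTopology Ω']
    {i : Ω → Ω'} (hi : IsInducing i) : IsInducing (pushforward hi.continuous.measurable) := by
  refine isInducing_iff_nhds.2 fun p => le_antisymm ?_ ?_
  · exact (ProbabilityMeasure.continuous_map hi.continuous).continuousAt.tendsto.le_comap
  · refine tendsto_of_forall_isOpen_le_liminf'
      (L := comap (pushforward _) (𝓝 (pushforward _ p))) (μs := id) fun G hG => ?_
    obtain ⟨G', hG', rfl⟩ := hi.isOpen_iff.1 hG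
    have h := ProbabilityMeasure.le_liminf_measure_open_of_tendsto
      (tendsto_comap (f := pushforward hi.continuous.measurable)
        (x := 𝓝 (pushforward hi.continuous.measurable p))) hG'
    simpa only [pushforward, ProbabilityMeasure.toMeasure_map, id,
      Measure.map_apply hi.continuous.measurable hG'.measurableSet] using h

theorem polishSpace_probabilityMeasure [BorelSpace Ω] [CompactSpace Ω]
    [TopologicalSpace.MetrizableSpace Ω] : PolishSpace (ProbabilityMeasure Ω) :=
  let := TopologicalSpace.metrizableSpaceMetric (ProbabilityMeasure Ω)
  inferInstance

instance secondCountableTopology_probabilityMeasure [BorelSpace Ω]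
    [TopologicalSpace.MetrizableSpace Ω] [SecondCountableTopology Ω] :
    SecondCountableTopology (ProbabilityMeasure Ω) := by
  let := TopologicalSpace.metrizableSpaceMetric Ω
  obtain ⟨i, hi⟩ := Metric.PiNatEmbed.exists_embedding_to_hilbert_cube (X := Ω)
  have := polishSpace_probabilityMeasure (Ω := ℕ → unitInterval)
  exact (isInducing_pushforward hi.isInducing).secondCountableTopology

theorem opensMeasurableSpace_probabilityMeasure [BorelSpace Ω]
    [SecondCountableTopology (ProbabilityMeasure Ω)] :
    OpensMeasurableSpace (ProbabilityMeasure Ω) := by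
  let t (φ : Ω →ᵇ ℝ) : TopologicalSpace (ProbabilityMeasure Ω) :=
    .induced (fun p => ∫ y, φ y ∂(p : Measure Ω)) inferInstance
  have h : (inferInstance : TopologicalSpace (ProbabilityMeasure Ω)) =
      .generateFrom (⋃ φ, {s | IsOpen[t φ] s}) := by
    refine (isInducing_integral_boundedContinuousFunction.eq_induced.trans ?_).trans
      (generateFrom_iUnion_isOpen t).symm
    simp only [Pi.topologicalSpace, induced_iInf, induced_compose]
    rfl
  refine ⟨(borel_eq_generateFrom_of_subbasis h).trans_le ?_⟩
  refine MeasurableSpace.generateFrom_le fun s hs => ?_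
  obtain ⟨φ, U, hU, rfl⟩ := mem_iUnion.1 hs
  exact measurable_integral_probabilityMeasure φ.continuous.measurable hU.measurableSet

instance borelSpace_probabilityMeasure [BorelSpace Ω]
    [TopologicalSpace.MetrizableSpace Ω] [SecondCountableTopology Ω] :
    BorelSpace (ProbabilityMeasure Ω) := by
  refine ⟨le_antisymm ?_ opensMeasurableSpace_probabilityMeasure.borel_le⟩
  have h : Measurable[borel _] fun p : ProbabilityMeasure Ω => (p : Measure Ω) := by
    let : MeasurableSpace (ProbabilityMeasure Ω) := borel _
    have : BorelSpace (ProbabilityMeasure Ω) := ⟨rfl⟩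
    refine Measurable.measure_of_isPiSystem_of_isProbabilityMeasure BorelSpace.measurable_eq
      isPiSystem_isOpen fun G hG => (lowerSemicontinuous_iff_le_liminf.2 fun p => ?_).measurable
    exact ProbabilityMeasure.le_liminf_measure_open_of_tendsto tendsto_id hG
  exact h.comap_le

end WeakTopology

theorem standardBorelSpace_of_measurableEmbedding {A B : Type*} [MeasurableSpace A]
    [MeasurableSpace B] [StandardBorelSpace B] {f : A → B} (hf : MeasurableEmbedding f) :
    StandardBorelSpace A := by
  obtain ⟨_, _, _⟩ := (hf.measurableSet_range.standardBorel).polish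
  let : TopologicalSpace A := .induced hf.equivRange inferInstance
  exact ⟨_, hf.equivRange.measurableEmbedding.borelSpace ⟨rfl⟩,
    hf.equivRange.toEquiv.polishSpace_induced⟩

instance standardBorelSpace_probabilityMeasure {Ω : Type*} [MeasurableSpace Ω]
    [StandardBorelSpace Ω] [Nonempty Ω] : StandardBorelSpace (ProbabilityMeasure Ω) := by
  let := upgradeStandardBorel Ω
  let := TopologicalSpace.metrizableSpaceMetric Ω
  obtain ⟨i, hi⟩ := Metric.PiNatEmbed.exists_embedding_to_hilbert_cube (X := Ω)
  have := polishSpace_probabilityMeasure (Ω := ℕ → unitInterval)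
  exact standardBorelSpace_of_measurableEmbedding (measurableEmbedding_pushforward
    (hi.continuous.measurableEmbedding hi.injective))

section LowerSemicontinuity

theorem exists_lowerSemicontinuous_extension {A B : Type*} [TopologicalSpace A]
    [TopologicalSpace B] {γ : Type*} [CompleteLinearOrder γ] [DenselyOrdered γ] {E : A → B}
    (hE : IsInducing E) {c : A → γ} (hc : LowerSemicontinuous c) :
    ∃ c' : B → γ, LowerSemicontinuous c' ∧ ∀ a, c' (E a) = c a := by
  refine ⟨fun z => ⨆ (U : Set B) (_ : IsOpen U ∧ z ∈ U), ⨅ a ∈ E ⁻¹' U, c a, fun z y hy => ?_,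
    fun a => le_antisymm (iSup₂_le fun U hU => iInf₂_le a hU.2) (le_of_forall_lt fun y hy => ?_)⟩
  · obtain ⟨U, hU, hyU⟩ : ∃ U, ∃ _ : IsOpen U ∧ z ∈ U, y < ⨅ a ∈ E ⁻¹' U, c a := by
      simpa only [lt_iSup_iff] using hy
    filter_upwards [hU.1.mem_nhds hU.2] with z' hz'
    exact hyU.trans_le (le_iSup₂_of_le U ⟨hU.1, hz'⟩ le_rfl)
  · obtain ⟨b, hyb, hb⟩ := exists_between hy
    obtain ⟨V, hV, hVc⟩ := mem_comap.1 (hE.nhds_eq_comap a ▸ hc a b hb)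
    obtain ⟨U, hUV, hU, haU⟩ := mem_nhds_iff.1 hV
    exact hyb.trans_le (le_iSup₂_of_le U ⟨hU, haU⟩ (le_iInf₂ fun a' ha' => (hVc (hUV ha')).le))

section MoreauYosida

variable {Z : Type*} [PseudoEMetricSpace Z]

/-- The `n`-th Moreau–Yosida regularization of `g` truncated at height `n`: the largest
`n`-Lipschitz function below `min g n`. -/
def moreauYosida (g : Z → ℝ≥0∞) (n : ℕ) (z : Z) : ℝ≥0∞ :=
  ⨅ w, min (g w) n + n * edist z w

theorem continuous_moreauYosida (g : Z → ℝ≥0∞) (n : ℕ) : Continuous (moreauYosida g n) := by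
  refine continuous_of_le_add_edist n (ENNReal.natCast_ne_top n) fun x y => ?_
  simp only [moreauYosida, ENNReal.iInf_add]
  refine iInf_mono fun w => ?_
  rw [add_assoc, ← mul_add, add_comm (edist y w)]
  gcongr
  exact edist_triangle x y w

theorem moreauYosida_le_min (g : Z → ℝ≥0∞) (n : ℕ) (z : Z) :
    moreauYosida g n z ≤ min (g z) n :=
  (iInf_le _ z).trans_eq (by rw [edist_self, mul_zero, add_zero])

theorem monotone_moreauYosida (g : Z → ℝ≥0∞) : Monotone (moreauYosida g) := by
  intro m n hmn z
  unfold moreauYosida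
  gcongr

theorem iSup_moreauYosida {g : Z → ℝ≥0∞} (hg : LowerSemicontinuous g) (z : Z) :
    ⨆ n, moreauYosida g n z = g z := by
  refine le_antisymm (iSup_le fun n => (moreauYosida_le_min g n z).trans (min_le_left _ _))
    (le_of_forall_lt fun a ha => ?_)
  obtain ⟨b, hab, hb⟩ := exists_between ha
  obtain ⟨δ, hδ, hball⟩ := EMetric.mem_nhds_iff.1 (hg z b hb)
  obtain ⟨n₁, hn₁⟩ := ENNReal.exists_nat_gt hb.ne_top
  obtain ⟨n₂, hn₂⟩ := ENNReal.exists_nat_mul_gt hδ.ne' hb.ne_top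
  refine hab.trans_le (le_iSup_of_le (max n₁ n₂) (le_iInf fun w => ?_))
  obtain hw | hw := lt_or_ge (edist w z) δ
  · refine le_add_right (le_min (hball hw : b < g w).le (hn₁.le.trans ?_))
    exact_mod_cast le_max_left n₁ n₂
  · refine le_add_left (hn₂.le.trans ?_)
    rw [edist_comm]
    gcongr
    exact le_max_right n₁ n₂

end MoreauYosida

variable {Z : Type*} [TopologicalSpace Z] [MeasurableSpace Z] [OpensMeasurableSpace Z]

theorem continuous_lintegral_finiteMeasure {f : Z → ℝ≥0∞} (hf : Continuous f) {K : ℝ≥0}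
    (hK : ∀ z, f z ≤ K) : Continuous fun μ : FiniteMeasure Z => ∫⁻ z, f z ∂(μ : Measure Z) := by
  have htop (z : Z) : f z ≠ ⊤ := ne_top_of_le_ne_top ENNReal.coe_ne_top (hK z)
  have hmem (z : Z) : ((f z).toNNReal : ℝ) ∈ Icc 0 (K : ℝ) :=
    ⟨NNReal.coe_nonneg _, NNReal.coe_le_coe.2 (ENNReal.toNNReal_mono ENNReal.coe_ne_top (hK z))⟩
  let φ : Z →ᵇ ℝ≥0 := BoundedContinuousFunction.mkOfBound
    ⟨fun z => (f z).toNNReal, ENNReal.continuousOn_toNNReal.comp_continuous hf htop⟩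
    (K - 0) fun x y => Real.dist_le_of_mem_Icc (hmem x) (hmem y)
  exact (FiniteMeasure.continuous_lintegral_boundedContinuousFunction φ).congr fun μ =>
    lintegral_congr fun z => ENNReal.coe_toNNReal (htop z)

theorem lowerSemicontinuous_lintegral_finiteMeasure [TopologicalSpace.PseudoMetrizableSpace Z]
    {g : Z → ℝ≥0∞} (hg : LowerSemicontinuous g) :
    LowerSemicontinuous fun μ : FiniteMeasure Z => ∫⁻ z, g z ∂(μ : Measure Z) := by
  let := TopologicalSpace.pseudoMetrizableSpacePseudoMetric Z
  have h (μ : FiniteMeasure Z) :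
      ∫⁻ z, g z ∂(μ : Measure Z) = ⨆ n, ∫⁻ z, moreauYosida g n z ∂(μ : Measure Z) := by
    rw [← lintegral_iSup (fun n => (continuous_moreauYosida g n).measurable)
      (monotone_moreauYosida g)]
    simp only [iSup_moreauYosida hg]
  simp only [h]
  exact lowerSemicontinuous_iSup fun n =>
    (continuous_lintegral_finiteMeasure (K := n) (continuous_moreauYosida g n) fun z =>
      (moreauYosida_le_min g n z).trans (min_le_right _ _)).lowerSemicontinuous

end LowerSemicontinuity

section RandomMeasures

variable {X Y : Type*} [MeasurableSpace X] [MeasurableSpace Y]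

instance nonempty_probabilityMeasure [Nonempty Y] : Nonempty (ProbabilityMeasure Y) :=
  let := Classical.inhabited_of_nonempty ‹Nonempty Y›
  inferInstance

/-- The barycenter `∫ p dQ(p)` of a measure `Q` on the space of probability measures. -/
def barycenter (Q : Measure (ProbabilityMeasure Y)) : Measure Y := coeKernel Y ∘ₘ Q

theorem integral_barycenter (Q : Measure (ProbabilityMeasure Y)) {f : Y → ℝ}
    (hf : Integrable f (barycenter Q)) :
    ∫ y, f y ∂(barycenter Q) = ∫ p, ∫ y, f y ∂(p : Measure Y) ∂Q :=
  Kernel.integral_comp (κ := .const Unit Q) (η := coeKernel Y) (a := ()) hf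

/-- The intensity of a measure `P` on `X × ProbabilityMeasure Y`: its barycenter in the second
variable, i.e. the measure `∫ δ_x ⊗ p dP(x, p)` on `X × Y`. -/
def intensity (P : Measure (X × ProbabilityMeasure Y)) : Measure (X × Y) :=
  (P ⊗ₘ (coeKernel Y).prodMkLeft X).map fun w => (w.1.1, w.2)

theorem measurable_lintegral_snd {g : X × Y → ℝ≥0∞} (hg : Measurable g) :
    Measurable fun z : X × ProbabilityMeasure Y => ∫⁻ y, g (z.1, y) ∂(z.2 : Measure Y) :=
  Measurable.lintegral_kernel_prod_right' (κ := (coeKernel Y).prodMkLeft X)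
    (f := fun w => g (w.1.1, w.2)) (by fun_prop)

theorem lintegral_intensity (P : Measure (X × ProbabilityMeasure Y)) [SFinite P]
    {g : X × Y → ℝ≥0∞} (hg : Measurable g) :
    ∫⁻ w, g w ∂(intensity P) = ∫⁻ z, ∫⁻ y, g (z.1, y) ∂(z.2 : Measure Y) ∂P := by
  rw [intensity, lintegral_map hg (by fun_prop), Measure.lintegral_compProd (by fun_prop)]
  rfl

theorem intensity_apply (P : Measure (X × ProbabilityMeasure Y)) [SFinite P] {s : Set (X × Y)}
    (hs : MeasurableSet s) :
    intensity P s = ∫⁻ z, (z.2 : Measure Y) (Prod.mk z.1 ⁻¹' s) ∂P := by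
  rw [← lintegral_indicator_one hs, lintegral_intensity P (measurable_one.indicator hs)]
  exact lintegral_congr fun z => lintegral_indicator_one (measurable_prodMk_left hs)

instance isFiniteMeasure_intensity (P : Measure (X × ProbabilityMeasure Y)) [IsFiniteMeasure P] :
    IsFiniteMeasure (intensity P) := by
  unfold intensity
  infer_instance

theorem fst_intensity (P : Measure (X × ProbabilityMeasure Y)) [SFinite P] :
    (intensity P).fst = P.fst := by
  conv_rhs => rw [← Measure.fst_compProd P ((coeKernel Y).prodMkLeft X)]
  rw [intensity, Measure.fst_map_prodMk measurable_snd, Measure.fst, Measure.fst,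
    Measure.map_map measurable_fst measurable_fst]
  rfl

theorem integral_intensity (P : Measure (X × ProbabilityMeasure Y)) [SFinite P]
    {g : X × Y → ℝ} (hg : Integrable g (intensity P)) :
    ∫ w, g w ∂(intensity P) = ∫ z, ∫ y, g (z.1, y) ∂(z.2 : Measure Y) ∂P := by
  have hmap : AEMeasurable (fun w : (X × ProbabilityMeasure Y) × Y => (w.1.1, w.2))
      (P ⊗ₘ (coeKernel Y).prodMkLeft X) := by fun_prop
  rw [intensity] at hg ⊢
  rw [integral_map hmap hg.aestronglyMeasurable]
  exact Measure.integral_compProd (hg.comp_aemeasurable hmap)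

theorem intensity_eq_fst_compProd (P : Measure (X × ProbabilityMeasure Y)) [IsFiniteMeasure P]
    [StandardBorelSpace (ProbabilityMeasure Y)] [Nonempty Y] :
    intensity P = P.fst ⊗ₘ (coeKernel Y ∘ₖ P.condKernel) := by
  refine Measure.ext_of_lintegral _ fun g hg => ?_
  rw [lintegral_intensity P hg, Measure.lintegral_compProd hg]
  conv_lhs => rw [← P.disintegrate P.condKernel,
    Measure.lintegral_compProd (measurable_lintegral_snd hg)]
  refine lintegral_congr fun x => ?_
  rw [Kernel.lintegral_comp _ _ _ (by fun_prop)]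
  rfl

theorem barycenter_condKernel_ae_eq (P : Measure (X × ProbabilityMeasure Y)) [IsFiniteMeasure P]
    [StandardBorelSpace (ProbabilityMeasure Y)] [StandardBorelSpace Y] [Nonempty Y] :
    ∀ᵐ x ∂P.fst, barycenter (P.condKernel x) = (intensity P).condKernel x := by
  have h := eq_condKernel_of_measure_eq_compProd (ρ := intensity P) (coeKernel Y ∘ₖ P.condKernel)
    (by rw [fst_intensity]; exact intensity_eq_fst_compProd P)
  rwa [fst_intensity] at h

variable [StandardBorelSpace Y] [Nonempty Y]

/-- The conditional law `ρ_x` of the second coordinate under `ρ`, as a probability measure. -/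
def condProb (ρ : Measure (X × Y)) [IsFiniteMeasure ρ] (x : X) : ProbabilityMeasure Y :=
  ⟨ρ.condKernel x, inferInstance⟩

theorem measurable_condProb (ρ : Measure (X × Y)) [IsFiniteMeasure ρ] :
    Measurable (condProb ρ) :=
  ρ.condKernel.measurable.subtype_mk

theorem measurable_prodMk_condProb (ρ : Measure (X × Y)) [IsFiniteMeasure ρ] :
    Measurable fun x => (x, condProb ρ x) :=
  measurable_id.prodMk (measurable_condProb ρ)

/-- The law of `x ↦ (x, ρ_x)` under the first marginal of `ρ`. -/
def condProbLaw (ρ : FiniteMeasure (X × Y)) : FiniteMeasure (X × ProbabilityMeasure Y) :=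
  ⟨(ρ : Measure (X × Y)).fst.map fun x => (x, condProb (ρ : Measure (X × Y)) x), inferInstance⟩

theorem intensity_condProbLaw (ρ : FiniteMeasure (X × Y)) :
    intensity (condProbLaw ρ : Measure (X × ProbabilityMeasure Y)) = ρ := by
  refine Measure.ext_of_lintegral _ fun g hg => ?_
  refine (lintegral_intensity _ hg).trans <| (lintegral_map (measurable_lintegral_snd hg)
    (measurable_prodMk_condProb _)).trans ?_
  conv_rhs => rw [← (ρ : Measure (X × Y)).disintegrate (ρ : Measure (X × Y)).condKernel,
    Measure.lintegral_compProd hg]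
  rfl

theorem mass_condProbLaw (ρ : FiniteMeasure (X × Y)) : (condProbLaw ρ).mass = ρ.mass :=
  congrArg ENNReal.toNNReal <|
    (Measure.map_apply (measurable_prodMk_condProb _) .univ).trans Measure.fst_univ

/-- The weak transport cost `∫ c (x, ρ_x) dρ₁(x)`. -/
def transportCost (c : X × ProbabilityMeasure Y → ℝ≥0∞) (ρ : FiniteMeasure (X × Y)) : ℝ≥0∞ :=
  ∫⁻ x, c (x, condProb (ρ : Measure (X × Y)) x) ∂(ρ : Measure (X × Y)).fst

theorem lintegral_condProbLaw {c : X × ProbabilityMeasure Y → ℝ≥0∞} (hc : Measurable c)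
    (ρ : FiniteMeasure (X × Y)) :
    ∫⁻ z, c z ∂(condProbLaw ρ : Measure (X × ProbabilityMeasure Y)) = transportCost c ρ :=
  lintegral_map hc (measurable_prodMk_condProb _)

end RandomMeasures

section WeakLimits

variable {X Y : Type*} [TopologicalSpace X] [SecondCountableTopology X] [MeasurableSpace X]
  [BorelSpace X]
  [TopologicalSpace Y] [TopologicalSpace.MetrizableSpace Y]
  [SecondCountableTopology Y] [MeasurableSpace Y] [BorelSpace Y]

theorem continuous_integral_mul_intensity (f : X →ᵇ ℝ) (h : Y →ᵇ ℝ) :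
    Continuous fun P : FiniteMeasure (X × ProbabilityMeasure Y) =>
      ∫ w, f w.1 * h w.2 ∂(intensity (P : Measure (X × ProbabilityMeasure Y))) := by
  have hcont : Continuous fun z : X × ProbabilityMeasure Y => f z.1 * ∫ y, h y ∂(z.2 : Measure Y) :=
    (f.continuous.comp continuous_fst).mul <| ((continuous_apply h).comp
      isInducing_integral_boundedContinuousFunction.continuous).comp continuous_snd
  have hbound (z : X × ProbabilityMeasure Y) :
      ‖f z.1 * ∫ y, h y ∂(z.2 : Measure Y)‖ ≤ ‖f‖ * ‖h‖ := by
    rw [norm_mul]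
    gcongr
    · exact f.norm_coe_le_norm z.1
    · exact h.norm_integral_le_norm z.2
  let φ := BoundedContinuousFunction.ofNormedAddCommGroup _ hcont _ hbound
  refine (FiniteMeasure.continuous_integral_boundedContinuousFunction φ).congr fun P => ?_
  let g : X × Y →ᵇ ℝ :=
    f.compContinuous ⟨Prod.fst, continuous_fst⟩ * h.compContinuous ⟨Prod.snd, continuous_snd⟩
  refine .trans ?_ (integral_intensity _ (g.integrable _)).symm
  exact integral_congr_ae (.of_forall fun z => (integral_const_mul _ _).symm)

theorem intensity_eq_of_tendsto [TopologicalSpace.MetrizableSpace X] {ι : Type*} {L : Filter ι}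
    [L.NeBot]
    {P : ι → FiniteMeasure (X × ProbabilityMeasure Y)}
    {P₀ : FiniteMeasure (X × ProbabilityMeasure Y)} (hP : Tendsto P L (𝓝 P₀))
    {ρ : ι → FiniteMeasure (X × Y)} {ρ₀ : FiniteMeasure (X × Y)} (hρ : Tendsto ρ L (𝓝 ρ₀))
    (hPρ : ∀ i, intensity (P i : Measure (X × ProbabilityMeasure Y)) = ρ i) :
    intensity (P₀ : Measure (X × ProbabilityMeasure Y)) = ρ₀ := by
  refine Measure.ext_of_integral_mul_boundedContinuousFunction fun f h => ?_
  let g : X × Y →ᵇ ℝ :=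
    f.compContinuous ⟨Prod.fst, continuous_fst⟩ * h.compContinuous ⟨Prod.snd, continuous_snd⟩
  have hPf := ((continuous_integral_mul_intensity f h).tendsto P₀).comp hP
  have hρf := ((FiniteMeasure.continuous_integral_boundedContinuousFunction g).tendsto ρ₀).comp hρ
  simp only [Function.comp_def, hPρ] at hPf
  exact tendsto_nhds_unique hPf hρf

end WeakLimits

section Jensen

variable {Ω : Type*} [MeasurableSpace Ω]

/-- Convexity of a functional along mixtures of probability measures. It replaces `ConvexOn`
because `ProbabilityMeasure Ω` is not a subset of a real vector space. -/
def MixtureConvex (g : ProbabilityMeasure Ω → ℝ≥0∞) : Prop :=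
  ∀ ⦃p q m : ProbabilityMeasure Ω⦄ ⦃s t : ℝ≥0∞⦄, s + t = 1 →
    (m : Measure Ω) = s • (p : Measure Ω) + t • (q : Measure Ω) → g m ≤ s * g p + t * g q

theorem exists_mixture (p q : ProbabilityMeasure Ω) {s t : ℝ≥0∞} (hst : s + t = 1) :
    ∃ m : ProbabilityMeasure Ω, (m : Measure Ω) = s • (p : Measure Ω) + t • (q : Measure Ω) :=
  ⟨⟨s • (p : Measure Ω) + t • (q : Measure Ω), ⟨by simp [hst]⟩⟩, rfl⟩

variable [TopologicalSpace Ω]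

/-- The integrals of the test functions in `I` against `p`: the coordinates in which the
finite-dimensional Jensen inequality is applied. -/
def moments (I : Set (Ω →ᵇ ℝ)) (p : ProbabilityMeasure Ω) (φ : I) : ℝ :=
  ∫ y, φ.1 y ∂(p : Measure Ω)

/-- The epigraph of `g` seen through the moments of the test functions in `I`. -/
def momentEpigraph (I : Set (Ω →ᵇ ℝ)) (g : ProbabilityMeasure Ω → ℝ≥0∞) : Set ((I → ℝ) × ℝ) :=
  {v | ∃ p, moments I p = v.1 ∧ g p ≤ ENNReal.ofReal v.2 ∧ 0 ≤ v.2}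

variable [OpensMeasurableSpace Ω] {g : ProbabilityMeasure Ω → ℝ≥0∞}

theorem moments_mixture (I : Set (Ω →ᵇ ℝ)) {p q m : ProbabilityMeasure Ω} {s t : ℝ}
    (hs : 0 ≤ s) (ht : 0 ≤ t) (hm : (m : Measure Ω) =
      ENNReal.ofReal s • (p : Measure Ω) + ENNReal.ofReal t • (q : Measure Ω)) :
    moments I m = s • moments I p + t • moments I q := by
  ext φ
  have hint (r : ℝ) (p : ProbabilityMeasure Ω) :
      Integrable φ.1 (ENNReal.ofReal r • (p : Measure Ω)) :=
    (φ.1.integrable _).smul_measure ENNReal.ofReal_ne_top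
  simp only [moments, Pi.add_apply, Pi.smul_apply]
  rw [hm, integral_add_measure (hint s p) (hint t q), integral_smul_measure,
    integral_smul_measure, ENNReal.toReal_ofReal hs, ENNReal.toReal_ofReal ht]

theorem convex_momentEpigraph (hg : MixtureConvex g) (I : Set (Ω →ᵇ ℝ)) :
    Convex ℝ (momentEpigraph I g) := by
  rintro v ⟨p, hpv, hgp, hv⟩ w ⟨q, hqw, hgq, hw⟩ s t hs ht hst
  have hst' : ENNReal.ofReal s + ENNReal.ofReal t = 1 := by
    rw [← ENNReal.ofReal_add hs ht, hst, ENNReal.ofReal_one]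
  obtain ⟨m, hm⟩ := exists_mixture p q hst'
  refine ⟨m, ?_, ?_, add_nonneg (mul_nonneg hs hv) (mul_nonneg ht hw)⟩
  · rw [moments_mixture I hs ht hm, hpv, hqw]
    rfl
  · calc g m ≤ ENNReal.ofReal s * g p + ENNReal.ofReal t * g q := hg hst' hm
      _ ≤ ENNReal.ofReal s * ENNReal.ofReal v.2 + ENNReal.ofReal t * ENNReal.ofReal w.2 := by
        gcongr
      _ = ENNReal.ofReal (s * v.2 + t * w.2) := by
        rw [ENNReal.ofReal_add (mul_nonneg hs hv) (mul_nonneg ht hw), ENNReal.ofReal_mul hs,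
          ENNReal.ofReal_mul ht]

theorem integrable_integral_probabilityMeasure (Q : Measure (ProbabilityMeasure Ω))
    [IsFiniteMeasure Q] (φ : Ω →ᵇ ℝ) :
    Integrable (fun p : ProbabilityMeasure Ω => ∫ y, φ y ∂(p : Measure Ω)) Q :=
  .of_bound (measurable_integral_probabilityMeasure φ.continuous.measurable).aestronglyMeasurable
    ‖φ‖ (.of_forall fun p => φ.norm_integral_le_norm p)

theorem moments_barycenter_mem_closure (hg : MixtureConvex g) (hgm : Measurable g)
    {Q : Measure (ProbabilityMeasure Ω)} [IsProbabilityMeasure Q] (hfin : ∫⁻ p, g p ∂Q ≠ ⊤)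
    {q : ProbabilityMeasure Ω} (hq : barycenter Q = q) {I : Set (Ω →ᵇ ℝ)} (hI : I.Finite) :
    (moments I q, (∫⁻ p, g p ∂Q).toReal) ∈ closure (momentEpigraph I g) := by
  have := hI.fintype
  have htop : ∀ᵐ p ∂Q, g p < ⊤ := ae_lt_top hgm hfin
  have hmem : ∀ᵐ p ∂Q, (moments I p, (g p).toReal) ∈ closure (momentEpigraph I g) := by
    filter_upwards [htop] with p hp
    exact subset_closure ⟨p, rfl, (ENNReal.ofReal_toReal hp.ne).ge, ENNReal.toReal_nonneg⟩
  have hint_g : Integrable (fun p => (g p).toReal) Q :=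
    integrable_toReal_of_lintegral_ne_top hgm.aemeasurable hfin
  have hint_φ (φ : I) : Integrable (fun p => moments I p φ) Q :=
    integrable_integral_probabilityMeasure Q φ.1
  have hint : Integrable (moments I) Q := Integrable.of_eval hint_φ
  have hmoments : ∫ p, moments I p ∂Q = moments I q := by
    ext φ
    rw [eval_integral hint_φ]
    unfold moments
    rw [← hq, integral_barycenter Q (hq ▸ φ.1.integrable _)]
  have := (convex_momentEpigraph hg I).closure.integral_mem isClosed_closure hmem
    (hint.prodMk hint_g)
  rwa [integral_pair hint hint_g, hmoments, integral_toReal hgm.aemeasurable htop] at this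

theorem exists_finite_moments_nhds (hg : LowerSemicontinuous g) {q : ProbabilityMeasure Ω}
    {b : ℝ≥0∞} (hb : b < g q) :
    ∃ I : Set (Ω →ᵇ ℝ), I.Finite ∧ ∃ U ∈ 𝓝 (moments I q), ∀ p, moments I p ∈ U → b < g p := by
  have hnhds : {p | b < g p} ∈ 𝓝 q := hg q b hb
  rw [isInducing_integral_boundedContinuousFunction.nhds_eq_comap, nhds_pi, mem_comap] at hnhds
  obtain ⟨V, hV, hVg⟩ := hnhds
  obtain ⟨I, hI, t, ht, htV⟩ := Filter.mem_pi.1 hV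
  have := hI.fintype
  refine ⟨I, hI, univ.pi fun φ => t φ.1, set_pi_mem_nhds finite_univ fun φ _ => ht φ.1,
    fun p hp => hVg (htV fun φ hφ => hp ⟨φ, hφ⟩ (mem_univ _))⟩

theorem MixtureConvex.apply_barycenter_le_lintegral (hg : MixtureConvex g)
    (hglsc : LowerSemicontinuous g) (hgm : Measurable g) {Q : Measure (ProbabilityMeasure Ω)}
    [IsProbabilityMeasure Q] {q : ProbabilityMeasure Ω} (hq : barycenter Q = q) :
    g q ≤ ∫⁻ p, g p ∂Q := by
  by_contra! hlt
  obtain ⟨b, hQb, hbq⟩ := exists_between hlt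
  obtain ⟨I, hI, U, hU, hUb⟩ := exists_finite_moments_nhds hglsc hbq
  have hnhds : U ×ˢ Iio b.toReal ∈ 𝓝 (moments I q, (∫⁻ p, g p ∂Q).toReal) :=
    prod_mem_nhds hU (Iio_mem_nhds ((ENNReal.toReal_lt_toReal hlt.ne_top hbq.ne_top).2 hQb))
  obtain ⟨v, ⟨hvU, hvb⟩, p, hpv, hgp, hv⟩ := mem_closure_iff_nhds.1
    (moments_barycenter_mem_closure hg hgm hlt.ne_top hq hI) _ hnhds
  have hbp : b < g p := hUb p (hpv ▸ hvU)
  have hvb' : ENNReal.ofReal v.2 < b := (ENNReal.ofReal_lt_iff_lt_toReal hv hbq.ne_top).2 hvb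
  exact (hbp.trans_le hgp).not_gt hvb'

end Jensen

section Pullback

variable {X X' Y Y' : Type*} [MeasurableSpace X] [MeasurableSpace X'] [MeasurableSpace Y]
  [MeasurableSpace Y']

theorem intensity_map (P : Measure (X × ProbabilityMeasure Y)) [SFinite P] {f : X → X'}
    (hf : Measurable f) {g : Y → Y'} (hg : Measurable g) :
    intensity (P.map (Prod.map f (pushforward hg))) = (intensity P).map (Prod.map f g) := by
  have hfg := hf.prodMap hg
  refine Measure.ext_of_lintegral _ fun h hh => ?_
  rw [lintegral_intensity _ hh, lintegral_map (measurable_lintegral_snd hh)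
    (hf.prodMap (measurable_pushforward hg)), lintegral_map hh hfg]
  refine .trans ?_ (lintegral_intensity P (hh.comp hfg)).symm
  exact lintegral_congr fun z => lintegral_map (hh.comp measurable_prodMk_left) hg

theorem exists_map_pushforward_eq [Nonempty Y] {g : Y → Y'} (hg : MeasurableEmbedding g)
    {P : Measure (X × ProbabilityMeasure Y')} [IsFiniteMeasure P] {ρ : Measure (X × Y)}
    (hP : intensity P = ρ.map (Prod.map id g)) :
    ∃ P' : Measure (X × ProbabilityMeasure Y), IsFiniteMeasure P' ∧ intensity P' = ρ ∧
      P'.map (Prod.map id (pushforward hg.measurable)) = P := by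
  obtain ⟨r, hr, hrg⟩ := hg.exists_measurable_extend measurable_id fun _ => ‹Nonempty Y›
  have hmeas : MeasurableSet (Prod.snd ⁻¹' (range g)ᶜ : Set (X × Y')) :=
    measurable_snd hg.measurableSet_range.compl
  have hconc : ∀ᵐ z ∂P, (z.2 : Measure Y') (range g)ᶜ = 0 := by
    have hnull : ∫⁻ z, (z.2 : Measure Y') (range g)ᶜ ∂P = 0 := by
      have hrange : (Prod.map id g : X × Y → X × Y') ⁻¹' (Prod.snd ⁻¹' (range g)ᶜ) = ∅ :=
        eq_empty_of_forall_notMem fun z hz => hz (mem_range_self z.2)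
      calc ∫⁻ z, (z.2 : Measure Y') (range g)ᶜ ∂P
          = intensity P (Prod.snd ⁻¹' (range g)ᶜ) := (intensity_apply P hmeas).symm
        _ = 0 := by
          rw [hP, Measure.map_apply (measurable_id.prodMap hg.measurable) hmeas, hrange,
            measure_empty]
    exact (lintegral_eq_zero_iff (((Measure.measurable_coe hg.measurableSet_range.compl).comp
      measurable_subtype_coe).comp measurable_snd)).1 hnull
  refine ⟨P.map (Prod.map id (pushforward hr)), inferInstance, ?_, ?_⟩
  · rw [intensity_map P measurable_id hr, hP, Measure.map_map (measurable_id.prodMap hr)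
      (measurable_id.prodMap hg.measurable), Prod.map_comp_map, hrg, Function.comp_id, Prod.map_id,
      Measure.map_id]
  · rw [Measure.map_map (measurable_id.prodMap (measurable_pushforward _))
      (measurable_id.prodMap (measurable_pushforward hr))]
    refine (Measure.map_congr (g := id) ?_).trans Measure.map_id
    filter_upwards [hconc] with z hz
    exact Prod.ext rfl (pushforward_pushforward_of_leftInverse hg hr (congrFun hrg) hz)

theorem map_compProd_comap {μ : Measure X} [SFinite μ] {f : X → X'} (hf : Measurable f)
    (κ : Kernel X' Y) [IsSFiniteKernel κ] :
    (μ ⊗ₘ κ.comap f hf).map (Prod.map f id) = μ.map f ⊗ₘ κ := by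
  refine Measure.ext_of_lintegral _ fun h hh => ?_
  rw [lintegral_map hh (by fun_prop), Measure.lintegral_compProd (by fun_prop),
    Measure.lintegral_compProd hh, lintegral_map hh.lintegral_kernel_prod_right' hf]
  rfl

theorem map_injective_of_comap_eq {f : X → X'}
    (hf : MeasurableSpace.comap f ‹MeasurableSpace X'› = ‹MeasurableSpace X›) :
    Function.Injective fun μ : Measure X => μ.map f := by
  intro μ ν h
  ext s hs
  have hfm : Measurable f := hf ▸ comap_measurable f
  obtain ⟨t, ht, rfl⟩ := MeasurableSpace.measurableSet_comap.1 (hf ▸ hs)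
  simpa only [Measure.map_apply hfm ht] using DFunLike.congr_fun h t

theorem comap_eq_of_isInducing [TopologicalSpace X] [BorelSpace X] [TopologicalSpace X']
    [BorelSpace X'] {f : X → X'} (hf : IsInducing f) :
    MeasurableSpace.comap f ‹MeasurableSpace X'› = ‹MeasurableSpace X› := by
  rw [BorelSpace.measurable_eq (α := X), BorelSpace.measurable_eq (α := X'), ← borel_comap,
    hf.eq_induced]

theorem comap_prodMap_id_eq {f : X → X'}
    (hf : MeasurableSpace.comap f ‹MeasurableSpace X'› = ‹MeasurableSpace X›) :
    MeasurableSpace.comap (Prod.map f (id : Y → Y)) inferInstance =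
      (inferInstance : MeasurableSpace (X × Y)) := by
  subst hf
  simp only [Prod.instMeasurableSpace, MeasurableSpace.prod, MeasurableSpace.comap_sup,
    MeasurableSpace.comap_comp]
  rfl

theorem exists_map_prodMap_id_eq [StandardBorelSpace Y] [Nonempty Y] {f : X → X'}
    (hf : MeasurableSpace.comap f ‹MeasurableSpace X'› = ‹MeasurableSpace X›)
    {P : Measure (X' × ProbabilityMeasure Y)} [IsFiniteMeasure P] {ρ : Measure (X × Y)}
    [IsFiniteMeasure ρ] (hP : intensity P = ρ.map (Prod.map f id)) :
    ∃ P' : Measure (X × ProbabilityMeasure Y), IsFiniteMeasure P' ∧ intensity P' = ρ ∧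
      P'.map (Prod.map f id) = P := by
  have hfm : Measurable f := hf ▸ comap_measurable f
  have hfst : P.fst = ρ.fst.map f := by
    rw [← fst_intensity, hP, Measure.fst, Measure.fst, Measure.map_map measurable_fst (by fun_prop),
      Measure.map_map hfm measurable_fst]
    rfl
  have hmap : (ρ.fst ⊗ₘ P.condKernel.comap f hfm).map (Prod.map f id) = P := by
    rw [map_compProd_comap, ← hfst, P.disintegrate]
  refine ⟨_, inferInstance, map_injective_of_comap_eq (comap_prodMap_id_eq hf) ?_, hmap⟩
  have h := intensity_map (ρ.fst ⊗ₘ P.condKernel.comap f hfm) hfm (measurable_id (α := Y))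
  rw [pushforward_id, hmap, hP] at h
  exact h.symm

theorem exists_map_prodMap_pushforward_eq [StandardBorelSpace Y] [Nonempty Y] {f : X → X'}
    (hf : MeasurableSpace.comap f ‹MeasurableSpace X'› = ‹MeasurableSpace X›) {g : Y → Y'}
    (hg : MeasurableEmbedding g) {P : Measure (X' × ProbabilityMeasure Y')} [IsFiniteMeasure P]
    {ρ : Measure (X × Y)} [IsFiniteMeasure ρ] (hP : intensity P = ρ.map (Prod.map f g)) :
    ∃ P' : Measure (X × ProbabilityMeasure Y), IsFiniteMeasure P' ∧ intensity P' = ρ ∧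
      P'.map (Prod.map f (pushforward hg.measurable)) = P := by
  have hfm : Measurable f := hf ▸ comap_measurable f
  have hgm := hg.measurable
  have hpush := measurable_pushforward hgm
  obtain ⟨P₁, _, hP₁, rfl⟩ := exists_map_pushforward_eq hg (ρ := ρ.map (Prod.map f id)) <| by
    rw [hP, Measure.map_map (by fun_prop) (by fun_prop)]
    rfl
  obtain ⟨P₂, hfin, hP₂, rfl⟩ := exists_map_prodMap_id_eq hf hP₁
  refine ⟨P₂, hfin, hP₂, ?_⟩
  rw [Measure.map_map (by fun_prop) (by fun_prop)]
  rfl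

end Pullback

theorem exists_tendsto_of_tendsto_mass {Z ι : Type*} [TopologicalSpace Z] [CompactSpace Z]
    [TopologicalSpace.MetrizableSpace Z] [MeasurableSpace Z] [BorelSpace Z] {L : Ultrafilter ι}
    {P : ι → FiniteMeasure Z} {m : ℝ≥0} (hm : Tendsto (fun i => (P i).mass) L (𝓝 m)) :
    ∃ P₀, Tendsto P L (𝓝 P₀) := by
  have hbound : ∀ᶠ i in (L : Filter ι), (P i).mass ≤ m + 1 :=
    (hm.eventually_lt_const (lt_add_one m)).mono fun _ => le_of_lt
  obtain ⟨P₀, -, hP₀⟩ := (isCompact_setOfPred_finiteMeasure_le_of_compactSpace Z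
    (m + 1)).ultrafilter_le_nhds' (L.map P) hbound
  exact ⟨P₀, hP₀⟩

section TransportCost

variable {X Y : Type*} [TopologicalSpace X] [SecondCountableTopology X] [MeasurableSpace X]
  [BorelSpace X]
  [TopologicalSpace Y] [TopologicalSpace.MetrizableSpace Y] [SecondCountableTopology Y]
  [MeasurableSpace Y] [BorelSpace Y] [StandardBorelSpace Y] [Nonempty Y]
  {c : X × ProbabilityMeasure Y → ℝ≥0∞}

theorem transportCost_le_lintegral (hc : LowerSemicontinuous c)
    (hconv : ∀ x, MixtureConvex fun p => c (x, p)) {ρ : FiniteMeasure (X × Y)}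
    {P : Measure (X × ProbabilityMeasure Y)} [IsFiniteMeasure P] (hP : intensity P = ρ) :
    transportCost c ρ ≤ ∫⁻ z, c z ∂P := by
  have hfst : (ρ : Measure (X × Y)).fst = P.fst := hP ▸ fst_intensity P
  have hbar := barycenter_condKernel_ae_eq P
  calc transportCost c ρ
      = ∫⁻ x, c (x, condProb (ρ : Measure (X × Y)) x) ∂P.fst := by rw [transportCost, hfst]
    _ ≤ ∫⁻ x, ∫⁻ p, c (x, p) ∂(P.condKernel x) ∂P.fst := by
      refine lintegral_mono_ae ?_
      filter_upwards [hbar] with x hx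
      simp only [hP] at hx
      exact (hconv x).apply_barycenter_le_lintegral
        (hc.comp (by fun_prop)) (hc.measurable.comp measurable_prodMk_left) hx
    _ = ∫⁻ z, c z ∂P := by
      rw [← Measure.lintegral_compProd hc.measurable, P.disintegrate]

theorem exists_tendsto_map_condProbLaw {X' Y' : Type*}
    [TopologicalSpace X'] [CompactSpace X'] [TopologicalSpace.MetrizableSpace X']
    [MeasurableSpace X'] [BorelSpace X'] [TopologicalSpace Y'] [CompactSpace Y']
    [TopologicalSpace.MetrizableSpace Y'] [MeasurableSpace Y'] [BorelSpace Y']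
    {f : X → X'} (hf : Continuous f) {g : Y → Y'} (hg : Continuous g)
    {ρ₀ : FiniteMeasure (X × Y)} {L : Ultrafilter (FiniteMeasure (X × Y))}
    (hL : (L : Filter (FiniteMeasure (X × Y))) ≤ 𝓝 ρ₀) :
    ∃ P₀ : FiniteMeasure (X' × ProbabilityMeasure Y'),
      Tendsto (fun ρ => (condProbLaw ρ).map (Prod.map f (pushforward hg.measurable))) L (𝓝 P₀) ∧
        intensity (P₀ : Measure (X' × ProbabilityMeasure Y')) =
          (ρ₀ : Measure (X × Y)).map (Prod.map f g) := by
  have hmeas := hf.measurable.prodMap (measurable_pushforward hg.measurable)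
  have hmass : Tendsto (fun ρ : FiniteMeasure (X × Y) =>
      ((condProbLaw ρ).map (Prod.map f (pushforward hg.measurable))).mass) L (𝓝 ρ₀.mass) := by
    refine ((FiniteMeasure.continuous_mass.tendsto ρ₀).mono_left hL).congr fun ρ => ?_
    rw [← mass_condProbLaw ρ]
    exact congrArg ENNReal.toNNReal (Measure.map_apply hmeas .univ).symm
  obtain ⟨P₀, hP₀⟩ := exists_tendsto_of_tendsto_mass hmass
  have hρ := ((FiniteMeasure.continuous_map (hf.prodMap hg)).tendsto ρ₀).mono_left hL
  refine ⟨P₀, hP₀, intensity_eq_of_tendsto hP₀ hρ fun ρ => ?_⟩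
  refine (intensity_map _ hf.measurable hg.measurable).trans ?_
  rw [intensity_condProbLaw]
  rfl

variable [TopologicalSpace.MetrizableSpace X]

theorem exists_intensity_eq_and_lintegral_le (hc : LowerSemicontinuous c)
    {ρ₀ : FiniteMeasure (X × Y)} {L : Ultrafilter (FiniteMeasure (X × Y))}
    (hL : (L : Filter (FiniteMeasure (X × Y))) ≤ 𝓝 ρ₀) {y : ℝ≥0∞}
    (hy : ∀ᶠ ρ in (L : Filter (FiniteMeasure (X × Y))), transportCost c ρ ≤ y) :
    ∃ P : Measure (X × ProbabilityMeasure Y), IsFiniteMeasure P ∧ intensity P = ρ₀ ∧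
      ∫⁻ z, c z ∂P ≤ y := by
  let := TopologicalSpace.metrizableSpaceMetric X
  let := TopologicalSpace.metrizableSpaceMetric Y
  obtain ⟨i, hi⟩ := Metric.PiNatEmbed.exists_embedding_to_hilbert_cube (X := X)
  obtain ⟨j, hj⟩ := Metric.PiNatEmbed.exists_embedding_to_hilbert_cube (X := Y)
  have he := hi.isInducing.prodMap (isInducing_pushforward hj.isInducing)
  obtain ⟨c', hc', hce⟩ := exists_lowerSemicontinuous_extension he hc
  have hem := he.continuous.measurable
  obtain ⟨P₀, hP₀, hint⟩ := exists_tendsto_map_condProbLaw hi.continuous hj.continuous hL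
  obtain ⟨P, hfin, hP, hPe⟩ := exists_map_prodMap_pushforward_eq
    (comap_eq_of_isInducing hi.isInducing)
    (hj.continuous.measurable.measurableEmbedding hj.injective) hint
  refine ⟨P, hfin, hP, ?_⟩
  have hP₀y : ∫⁻ z, c' z ∂(P₀ : Measure _) ≤ y := by
    refine ((lowerSemicontinuous_lintegral_finiteMeasure hc').isClosed_preimage y).mem_of_tendsto
      hP₀ ?_
    filter_upwards [hy] with ρ hρ
    refine (lintegral_map hc'.measurable hem).trans_le ?_
    simpa only [hce, lintegral_condProbLaw hc.measurable] using hρ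
  rwa [← hPe, lintegral_map hc'.measurable hem, lintegral_congr hce] at hP₀y

theorem lowerSemicontinuous_transportCost (hc : LowerSemicontinuous c)
    (hconv : ∀ x, MixtureConvex fun p => c (x, p)) :
    LowerSemicontinuous (transportCost c : FiniteMeasure (X × Y) → ℝ≥0∞) := by
  intro ρ₀ y hy
  by_contra hfreq
  have := Filter.frequently_iff_neBot.1 (not_eventually.1 hfreq)
  obtain ⟨L, hL⟩ := Ultrafilter.exists_le (𝓝 ρ₀ ⊓ 𝓟 {ρ | ¬ y < transportCost c ρ})
  obtain ⟨hLρ, hLy⟩ := le_inf_iff.1 hL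
  obtain ⟨P, _, hP, hPy⟩ := exists_intensity_eq_and_lintegral_le hc hLρ
    (mem_of_superset (le_principal_iff.1 hLy) fun ρ => not_lt.1)
  exact (((transportCost_le_lintegral hc hconv hP).trans hPy).trans_lt hy).false

end TransportCost

section ExtendedRealCosts

theorem posE_eq_toENNReal (a : EReal) : posE a = a.toENNReal := rfl

theorem posE_coe_sub_coe (u v : ℝ≥0∞) : posE ((u : EReal) - v) = u - v := by
  rw [posE_eq_toENNReal, EReal.toENNReal_sub (EReal.coe_ennreal_nonneg v), EReal.toENNReal_coe,
    EReal.toENNReal_coe]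

theorem posE_neg_coe_sub_coe (u : ℝ≥0∞) {v : ℝ≥0∞} (hv : v ≠ ⊤) :
    posE (-((u : EReal) - v)) = v - u := by
  rw [EReal.neg_sub (.inl (EReal.coe_ennreal_ne_bot u))
    (.inr (mt EReal.coe_ennreal_eq_top_iff.1 hv)), add_comm, ← sub_eq_add_neg, posE_coe_sub_coe]

theorem coe_sub_coe_eq_of_add_eq_add {a b u v : ℝ≥0∞} (hb : b ≠ ⊤) (hv : v ≠ ⊤)
    (h : a + v = u + b) : (a : EReal) - b = u - v := by
  lift b to ℝ≥0 using hb
  lift v to ℝ≥0 using hv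
  have h' : (a : EReal) + (v : ℝ) = u + (b : ℝ) := by
    simpa only [EReal.coe_ennreal_add] using! congrArg ((↑) : ℝ≥0∞ → EReal) h
  calc (a : EReal) - (b : ℝ) = a + (v : ℝ) - (v : ℝ) - (b : ℝ) := by
        rw [EReal.add_sub_cancel_right]
    _ = u + (b : ℝ) - (v : ℝ) - (b : ℝ) := by rw [h']
    _ = u + (b : ℝ) - (b : ℝ) - (v : ℝ) := by
        simp only [sub_eq_add_neg, add_right_comm]
    _ = u - (v : ℝ) := by rw [EReal.add_sub_cancel_right]

theorem eIntegral_coe_sub_coe {α : Type*} [MeasurableSpace α] {μ : Measure α} {u v : α → ℝ≥0∞}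
    (hu : Measurable u) (hv : Measurable v) (hfin : ∀ x, v x ≠ ⊤) (hint : ∫⁻ x, v x ∂μ ≠ ⊤) :
    eIntegral μ (fun x => (u x : EReal) - v x) =
      ((∫⁻ x, u x ∂μ : ℝ≥0∞) : EReal) - ((∫⁻ x, v x ∂μ : ℝ≥0∞) : EReal) := by
  refine coe_sub_coe_eq_of_add_eq_add ?_ hint ?_
  · refine ne_top_of_le_ne_top hint (lintegral_mono fun x => ?_)
    rw [posE_neg_coe_sub_coe _ (hfin x)]
    exact tsub_le_self
  · rw [← lintegral_add_right _ hv, ← lintegral_add_left hu]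
    refine lintegral_congr fun x => ?_
    rw [posE_coe_sub_coe, posE_neg_coe_sub_coe _ (hfin x), tsub_add_eq_max, add_tsub_eq_max]

theorem eIntegral_eq_lintegral_sub {α : Type*} [MeasurableSpace α] {μ : Measure α}
    [IsFiniteMeasure μ] {f : α → EReal} {N : ℝ≥0} (hf : ∀ x, 0 ≤ f x + (N : ℝ))
    (hm : Measurable fun x => (f x + (N : ℝ)).toENNReal) :
    eIntegral μ f = ((∫⁻ x, (f x + (N : ℝ)).toENNReal ∂μ : ℝ≥0∞) : EReal) -
      ((N * μ univ : ℝ≥0∞) : EReal) := by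
  rw [← lintegral_const, ← eIntegral_coe_sub_coe hm measurable_const
    (fun _ => ENNReal.coe_ne_top) (by simp [ENNReal.mul_eq_top])]
  congr 1 with x
  rw [EReal.coe_toENNReal (hf x)]
  exact EReal.add_sub_cancel_right.symm

theorem toENNReal_add_le_of_le {a b m N : EReal} {s t : ℝ≥0∞} (hst : s + t = 1)
    (h : m ≤ s * a + t * b) :
    (m + N).toENNReal ≤ s * (a + N).toENNReal + t * (b + N).toENNReal := by
  have hs : (s : EReal) ≠ ⊤ := mt EReal.coe_ennreal_eq_top_iff.1 fun hs => by simp [hs] at hst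
  have ht : (t : EReal) ≠ ⊤ := mt EReal.coe_ennreal_eq_top_iff.1 fun ht => by simp [ht] at hst
  have hs₀ := EReal.coe_ennreal_nonneg s
  have ht₀ := EReal.coe_ennreal_nonneg t
  have hst' : (s : EReal) + t = 1 := by rw [← EReal.coe_ennreal_add, hst, EReal.coe_ennreal_one]
  have hle : m + N ≤ s * (a + N) + t * (b + N) := by
    calc m + N ≤ (s * a + t * b) + (s + t) * N := by
          rw [hst', one_mul]
          gcongr
      _ = s * (a + N) + t * (b + N) := by
          rw [EReal.right_distrib_of_nonneg hs₀ ht₀,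
            EReal.left_distrib_of_nonneg_of_ne_top hs₀ hs,
            EReal.left_distrib_of_nonneg_of_ne_top ht₀ ht, add_add_add_comm]
  calc (m + N).toENNReal ≤ ((s : EReal) * (a + N) + t * (b + N)).toENNReal :=
        EReal.toENNReal_le_toENNReal hle
    _ ≤ ((s : EReal) * (a + N)).toENNReal + ((t : EReal) * (b + N)).toENNReal :=
        EReal.toENNReal_add_le
    _ = s * (a + N).toENNReal + t * (b + N).toENNReal := by
        rw [EReal.toENNReal_mul hs₀, EReal.toENNReal_mul ht₀, EReal.toENNReal_coe,
          EReal.toENNReal_coe]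

theorem mixtureConvex_toENNReal_add {Ω : Type*} [MeasurableSpace Ω]
    {g : ProbabilityMeasure Ω → EReal} (hg : ∀ (p q m : ProbabilityMeasure Ω) (t : ℝ),
      0 ≤ t → t ≤ 1 → (m : Measure Ω) = ENNReal.ofReal t • (p : Measure Ω) +
        ENNReal.ofReal (1 - t) • (q : Measure Ω) →
      g m ≤ (t : EReal) * g p + ((1 - t : ℝ) : EReal) * g q) (N : EReal) :
    MixtureConvex fun p => (g p + N).toENNReal := by
  intro p q m s t hst hm
  have hs : s ≤ 1 := hst ▸ le_self_add
  have hs' : ENNReal.ofReal s.toReal = s :=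
    ENNReal.ofReal_toReal (hs.trans_lt ENNReal.one_lt_top).ne
  have ht' : ENNReal.ofReal (1 - s.toReal) = t := by
    rw [ENNReal.ofReal_sub _ ENNReal.toReal_nonneg, hs', ENNReal.ofReal_one, ← hst]
    exact ENNReal.add_sub_cancel_left (hs.trans_lt ENNReal.one_lt_top).ne
  have hs₁ : s.toReal ≤ 1 := ENNReal.toReal_mono ENNReal.one_ne_top hs
  refine toENNReal_add_le_of_le hst ?_
  have h := hg p q m s.toReal ENNReal.toReal_nonneg hs₁ (by rw [hs', ht', hm])
  rwa [← hs', ← ht', EReal.coe_ennreal_ofReal, EReal.coe_ennreal_ofReal,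
    max_eq_left ENNReal.toReal_nonneg, max_eq_left (sub_nonneg.2 hs₁)]

theorem lowerSemicontinuous_toENNReal_add {A : Type*} [TopologicalSpace A] {f : A → EReal}
    (hf : LowerSemicontinuous f) (N : ℝ) : LowerSemicontinuous fun a => (f a + N).toENNReal := by
  have hcont : Continuous fun a : EReal => (a + N).toENNReal :=
    EReal.continuous_toENNReal.comp <| continuous_iff_continuousAt.2 fun a =>
      ContinuousAt.comp (f := fun a : EReal => (a, (N : EReal)))
        (EReal.continuousAt_add (.inr (EReal.coe_ne_bot N)) (.inr (EReal.coe_ne_top N)))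
        (by fun_prop)
  exact hcont.comp_lowerSemicontinuous hf fun a b hab =>
    EReal.toENNReal_le_toENNReal (by gcongr)

end ExtendedRealCosts

theorem stmt5_general
    {X₁ : Type*} [TopologicalSpace X₁] [TopologicalSpace.MetrizableSpace X₁]
    [SecondCountableTopology X₁] [MeasurableSpace X₁] [BorelSpace X₁]
    {X₂ : Type*} [TopologicalSpace X₂] [TopologicalSpace.MetrizableSpace X₂]
    [SecondCountableTopology X₂] [MeasurableSpace X₂] [BorelSpace X₂] [StandardBorelSpace X₂]
    [Nonempty X₂]
    (C : X₁ → ProbabilityMeasure X₂ → EReal)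
    (hClsc : LowerSemicontinuous fun q : X₁ × ProbabilityMeasure X₂ => C q.1 q.2)
    (hCbdd : ∃ K : ℝ, ∀ x p, (K : EReal) ≤ C x p)
    (hCconv : ∀ (x : X₁) (p q m : ProbabilityMeasure X₂) (t : ℝ), 0 ≤ t → t ≤ 1 →
      (m : Measure X₂) = ENNReal.ofReal t • (p : Measure X₂)
          + ENNReal.ofReal (1 - t) • (q : Measure X₂) →
      C x m ≤ (t : EReal) * C x p + ((1 - t : ℝ) : EReal) * C x q) :
    LowerSemicontinuous fun π : FiniteMeasure (X₁ × X₂) =>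
      eIntegral (π : Measure (X₁ × X₂)).fst
        (fun x₁ => C x₁ ⟨(π : Measure (X₁ × X₂)).condKernel x₁, inferInstance⟩) := by
  obtain ⟨K, hK⟩ := hCbdd
  let N : ℝ≥0 := (-K).toNNReal
  have hN (x : X₁) (p : ProbabilityMeasure X₂) : 0 ≤ C x p + (N : ℝ) := by
    have hKN : 0 ≤ K + N := by linarith [Real.le_coe_toNNReal (-K)]
    calc (0 : EReal) ≤ (K : EReal) + (N : ℝ) := by exact_mod_cast hKN
      _ ≤ C x p + (N : ℝ) := by gcongr; exact hK x p
  let c (z : X₁ × ProbabilityMeasure X₂) : ℝ≥0∞ := (C z.1 z.2 + (N : ℝ)).toENNReal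
  have hc : LowerSemicontinuous c := lowerSemicontinuous_toENNReal_add hClsc N
  have hcost := lowerSemicontinuous_transportCost hc fun x =>
    mixtureConvex_toENNReal_add (hCconv x) (N : ℝ)
  have heq (π : FiniteMeasure (X₁ × X₂)) : eIntegral (π : Measure (X₁ × X₂)).fst
      (fun x₁ => C x₁ (condProb (π : Measure (X₁ × X₂)) x₁)) =
        (transportCost c π : EReal) + (-(N * π.mass : ℝ) : ℝ) := by
    rw [eIntegral_eq_lintegral_sub (N := N) (fun x => hN x _)
      (hc.measurable.comp (measurable_prodMk_condProb _)), Measure.fst_univ, sub_eq_add_neg,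
      ← FiniteMeasure.ennreal_mass, ← ENNReal.coe_mul, EReal.coe_nnreal_eq_coe_real,
      EReal.coe_neg, NNReal.coe_mul]
    rfl
  have hmass : Continuous fun π : FiniteMeasure (X₁ × X₂) => (-(N * π.mass : ℝ) : ℝ) := by
    have := FiniteMeasure.continuous_mass (Ω := X₁ × X₂)
    fun_prop
  refine (funext heq : _ = fun π => _) ▸ LowerSemicontinuous.add' ?_
    (continuous_coe_real_ereal.comp hmass).lowerSemicontinuous fun π =>
      EReal.continuousAt_add (.inr (EReal.coe_ne_bot _)) (.inr (EReal.coe_ne_top _))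
  exact continuous_coe_ennreal_ereal.comp_lowerSemicontinuous hcost
    fun _ _ => EReal.coe_ennreal_le_coe_ennreal_iff.2

theorem stmt5
    {X₁ : Type*} [MetricSpace X₁] [PolishSpace X₁] [MeasurableSpace X₁] [BorelSpace X₁]
    {X₂ : Type*} [MetricSpace X₂] [PolishSpace X₂] [MeasurableSpace X₂] [BorelSpace X₂]
    [Nonempty X₂]
    (C : X₁ → ProbabilityMeasure X₂ → EReal)
    (hClsc : LowerSemicontinuous fun q : X₁ × ProbabilityMeasure X₂ => C q.1 q.2)
    (hCbdd : ∃ K : ℝ, ∀ x p, (K : EReal) ≤ C x p)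
    (hCconv : ∀ (x : X₁) (p q m : ProbabilityMeasure X₂) (t : ℝ), 0 ≤ t → t ≤ 1 →
      (m : Measure X₂) = ENNReal.ofReal t • (p : Measure X₂)
          + ENNReal.ofReal (1 - t) • (q : Measure X₂) →
      C x m ≤ (t : EReal) * C x p + ((1 - t : ℝ) : EReal) * C x q)
    (πk : ℕ → FiniteMeasure (X₁ × X₂)) (π : FiniteMeasure (X₁ × X₂))
    (hconv : Filter.Tendsto πk Filter.atTop (nhds π)) :
    eIntegral (π : Measure (X₁ × X₂)).fst
        (fun x₁ => C x₁ ⟨(π : Measure (X₁ × X₂)).condKernel x₁, inferInstance⟩)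
      ≤ Filter.liminf (fun k =>
          eIntegral ((πk k : Measure (X₁ × X₂))).fst
            (fun x₁ => C x₁ ⟨((πk k : Measure (X₁ × X₂))).condKernel x₁, inferInstance⟩))
          Filter.atTop :=
  ((stmt5_general C hClsc hCbdd hCconv).le_liminf π).trans (liminf_le_liminf_of_le hconv)
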